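/- arXiv:math/0502222 — 2 statements merged into one kernel-verified Lean document; each statement's English description precedes it below -/
import Mathlib

section
/- Let L be a field complete with respect to a nonarchimedean absolute value |·|, q ∈ L with 0 < |q| < 1, and let θ be the theta function with period q. Let α₁,…,α_r and β₁,…,β_r be elements of Lˣ with ∏_{i=1}^r α_i = ∏_{i=1}^r β_i. Then for every u ∈ Lˣ such that θ(β_i u) ≠ 0 and θ(β_i q u) ≠ 0 for all i, the function f(u) = ∏_{i=1}^r θ(α_i u)/θ(β_i u) is q-periodic: f(qu) = f(u). -/
/-- The `p`-adic theta function `θ(u) = θ(u,q) = (1-u)·∏_{n=1}^∞ (1-qⁿu)(1-qⁿu⁻¹)`,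
the infinite product being interpreted as a `tprod`. -/
noncomputable def tateTheta {L : Type*} [NormedField L] (q u : L) : L :=
  (1 - u) * ∏' n : ℕ, (1 - q ^ (n + 1) * u) * (1 - q ^ (n + 1) * u⁻¹)

/-!
In terms of the `q`-Pochhammer symbol `(a; q)_∞ = ∏_{n ≥ 0} (1 - qⁿa)`, the theta function is
`θ(u) = (u; q)_∞ (q u⁻¹; q)_∞`. Replacing `u` by `qu` removes the factor `1 - u` from the first
symbol and adds the factor `1 - u⁻¹` to the second, whence `θ(qu) = -u⁻¹ θ(u)`. Thus
`∏ θ(γᵢqu)` differs from `∏ θ(γᵢu)` by a factor which depends on the `γᵢ` only through their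
number and their product, and this factor cancels in the quotient.
-/

/-- The infinite `q`-Pochhammer symbol `(a; q)_∞`, out of which the theta function is built.
As a `tprod` it is meaningful only where the product converges, e.g. for `‖q‖ < 1`. -/
noncomputable def qPochhammerInf {R : Type*} [CommRing R] [TopologicalSpace R] (q a : R) : R :=
  ∏' n : ℕ, (1 - q ^ n * a)

section qPochhammerInf

variable {R : Type*} [NormedCommRing R] [NormOneClass R] [CompleteSpace R] {q : R}

lemma multipliable_one_sub_pow_mul (hq : ‖q‖ < 1) (a : R) :
    Multipliable fun n : ℕ ↦ 1 - q ^ n * a := by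
  have summable_norm : Summable fun n : ℕ ↦ ‖-(q ^ n * a)‖ := by
    simp only [norm_neg]
    exact ((summable_norm_geometric_of_norm_lt_one hq).mul_right ‖a‖).of_nonneg_of_le
      (fun _ ↦ norm_nonneg _) fun _ ↦ norm_mul_le _ _
  simpa only [sub_eq_add_neg] using multipliable_one_add_of_summable summable_norm

lemma qPochhammerInf_eq_one_sub_mul (hq : ‖q‖ < 1) (a : R) :
    qPochhammerInf q a = (1 - a) * qPochhammerInf q (q * a) := by
  have shift (n : ℕ) : 1 - q ^ (n + 1) * a = 1 - q ^ n * (q * a) := by ring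
  have multipliable_shift : Multipliable fun n : ℕ ↦ 1 - q ^ (n + 1) * a := by
    simpa only [shift] using multipliable_one_sub_pow_mul hq (q * a)
  rw [qPochhammerInf, tprod_eq_zero_mul' (f := fun n ↦ 1 - q ^ n * a) multipliable_shift]
  simp only [qPochhammerInf, shift, pow_zero, one_mul]

end qPochhammerInf

section tateTheta

variable {L : Type*} [NormedField L] [CompleteSpace L] {q : L}

lemma tateTheta_eq_qPochhammerInf_mul (hq : ‖q‖ < 1) (u : L) :
    tateTheta q u = qPochhammerInf q u * qPochhammerInf q (q * u⁻¹) := by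
  rw [qPochhammerInf_eq_one_sub_mul hq u, mul_assoc, qPochhammerInf, qPochhammerInf,
    ← (multipliable_one_sub_pow_mul hq _).tprod_mul (multipliable_one_sub_pow_mul hq _)]
  simp only [tateTheta, pow_succ, mul_assoc]

lemma tateTheta_q_mul (hq0 : q ≠ 0) (hq1 : ‖q‖ < 1) {u : L} (hu : u ≠ 0) :
    tateTheta q (q * u) = -u⁻¹ * tateTheta q u := by
  have inv_shift : q * (q * u)⁻¹ = u⁻¹ := by field_simp
  have factor_exchange : 1 - u⁻¹ = -u⁻¹ * (1 - u) := by field_simp; ring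
  calc tateTheta q (q * u)
      = qPochhammerInf q (q * u) * qPochhammerInf q u⁻¹ := by
        rw [tateTheta_eq_qPochhammerInf_mul hq1, inv_shift]
    _ = qPochhammerInf q (q * u) * ((1 - u⁻¹) * qPochhammerInf q (q * u⁻¹)) := by
        rw [qPochhammerInf_eq_one_sub_mul hq1 u⁻¹]
    _ = -u⁻¹ * ((1 - u) * qPochhammerInf q (q * u) * qPochhammerInf q (q * u⁻¹)) := by
        rw [factor_exchange]; ring
    _ = -u⁻¹ * tateTheta q u := by
        rw [← qPochhammerInf_eq_one_sub_mul hq1, ← tateTheta_eq_qPochhammerInf_mul hq1]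

variable {ι : Type*}

lemma prod_tateTheta_mul_q_mul (hq0 : q ≠ 0) (hq1 : ‖q‖ < 1) (s : Finset ι) (γ : ι → Lˣ)
    (u : Lˣ) :
    ∏ i ∈ s, tateTheta q (γ i * (q * u)) =
      ((-u⁻¹) ^ s.card * (∏ i ∈ s, γ i)⁻¹ : Lˣ) * ∏ i ∈ s, tateTheta q (γ i * u) := by
  have step (i : ι) : tateTheta q (γ i * (q * u)) =
      (-u⁻¹ * (γ i)⁻¹ : Lˣ) * tateTheta q (γ i * u) := by
    rw [mul_left_comm, ← Units.val_mul, tateTheta_q_mul hq0 hq1 (Units.ne_zero _)]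
    simp [mul_comm]
  simp only [step, Finset.prod_mul_distrib, ← Units.coe_prod, Finset.prod_const,
    Finset.prod_inv_distrib]

theorem tateTheta_quotient_periodic_general (hq0 : q ≠ 0) (hq1 : ‖q‖ < 1) {s : Finset ι}
    {α β : ι → Lˣ} (hprod : ∏ i ∈ s, α i = ∏ i ∈ s, β i) {u : Lˣ}
    (hβ : ∀ i ∈ s, tateTheta q (β i * u) ≠ 0) :
    ∏ i ∈ s, tateTheta q (α i * (q * u)) / tateTheta q (β i * (q * u)) =
      ∏ i ∈ s, tateTheta q (α i * u) / tateTheta q (β i * u) := by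
  have denom_ne_zero : ∏ i ∈ s, tateTheta q (β i * u) ≠ 0 := Finset.prod_ne_zero_iff.mpr hβ
  have denom_q_ne_zero : ∏ i ∈ s, tateTheta q (β i * (q * u)) ≠ 0 := by
    rw [prod_tateTheta_mul_q_mul hq0 hq1]
    exact mul_ne_zero (Units.ne_zero _) denom_ne_zero
  rw [Finset.prod_div_distrib, Finset.prod_div_distrib,
    div_eq_div_iff denom_q_ne_zero denom_ne_zero, prod_tateTheta_mul_q_mul hq0 hq1 s α,
    prod_tateTheta_mul_q_mul hq0 hq1 s β, hprod]
  ring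

end tateTheta

/-- **q-periodicity of theta quotients:** if `∏ αᵢ = ∏ βᵢ` then
`f(u) = ∏ θ(αᵢu)/θ(βᵢu)` satisfies `f(qu) = f(u)` (whenever the denominators are
nonzero at `u` and at `qu`). -/
theorem tateTheta_quotient_periodic {L : Type*} [NormedField L] [CompleteSpace L]
    [IsUltrametricDist L] (q : L) (hq0 : 0 < ‖q‖) (hq1 : ‖q‖ < 1)
    (r : ℕ) (α β : Fin r → Lˣ) (hprod : (∏ i, α i) = ∏ i, β i) (u : Lˣ)
    (hβ : ∀ i, tateTheta q ((β i : L) * (u : L)) ≠ 0)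
    (hβq : ∀ i, tateTheta q ((β i : L) * (q * (u : L))) ≠ 0) :
    (∏ i, tateTheta q ((α i : L) * (q * (u : L))) / tateTheta q ((β i : L) * (q * (u : L))))
      = ∏ i, tateTheta q ((α i : L) * (u : L)) / tateTheta q ((β i : L) * (u : L)) := by
  exact tateTheta_quotient_periodic_general (norm_pos_iff.mp hq0) hq1 hprod fun i _ ↦ hβ i
end

section
/- Let F be a field, and write Fˣ additively as a ℤ-module; let ∧²(Fˣ) denote its second exterior power over ℤ. For x, y ∈ F∖{0,1} with x ≠ y, set z = (1−x⁻¹)/(1−y⁻¹) and w = (1−x)/(1−y) (these lie in F∖{0,1}). Then x ∧ (1−x) − y ∧ (1−y) + (y/x) ∧ (1 − y/x) − z ∧ (1−z) + w ∧ (1−w) = 0 in ∧²(Fˣ). Consequently the map [x] ↦ x ∧ (1−x) descends to a well-defined homomorphism λ : P(F) → ∧²(Fˣ). -/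
open scoped TensorProduct

variable (F : Type*) [Field F]

/-- The five-term (scissors congruence) elements
`[x] - [y] + [y/x] - [(1-x⁻¹)/(1-y⁻¹)] + [(1-x)/(1-y)]` in the free abelian group
on `F ∖ {0,1}`. -/
def fiveTermSet : Set (FreeAbelianGroup {t : F // t ≠ 0 ∧ t ≠ 1}) :=
  { z | ∃ x y : {t : F // t ≠ 0 ∧ t ≠ 1}, x ≠ y ∧
      ∃ (h1 : (y : F) / (x : F) ≠ 0 ∧ (y : F) / (x : F) ≠ 1)
        (h2 : (1 - (x : F)⁻¹) / (1 - (y : F)⁻¹) ≠ 0 ∧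
              (1 - (x : F)⁻¹) / (1 - (y : F)⁻¹) ≠ 1)
        (h3 : (1 - (x : F)) / (1 - (y : F)) ≠ 0 ∧ (1 - (x : F)) / (1 - (y : F)) ≠ 1),
      z = FreeAbelianGroup.of x - FreeAbelianGroup.of y
          + FreeAbelianGroup.of (⟨_, h1⟩ : {t : F // t ≠ 0 ∧ t ≠ 1})
          - FreeAbelianGroup.of (⟨_, h2⟩ : {t : F // t ≠ 0 ∧ t ≠ 1})
          + FreeAbelianGroup.of (⟨_, h3⟩ : {t : F // t ≠ 0 ∧ t ≠ 1}) }

/-- The pre-Bloch group `P(F)`: the free abelian group on `F ∖ {0,1}` modulo the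
five-term (scissors congruence) relations. -/
abbrev PreBloch := FreeAbelianGroup {t : F // t ≠ 0 ∧ t ≠ 1} ⧸
  AddSubgroup.closure (fiveTermSet F)

/-- The wedge `a ∧ b` of two nonzero elements of `F`, viewed in the second exterior
power (over `ℤ`) of the additivized unit group `Fˣ`. -/
noncomputable def wedgeD (a b : F) (ha : a ≠ 0) (hb : b ≠ 0) :
    ⋀[ℤ]^2 (Additive Fˣ) :=
  ⟨ExteriorAlgebra.ιMulti ℤ 2
      ![Additive.ofMul (Units.mk0 a ha), Additive.ofMul (Units.mk0 b hb)],
    ExteriorAlgebra.ιMulti_range ℤ 2 (Set.mem_range_self _)⟩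

section Aux

variable {F}

lemma aux_one_sub_ne {x : F} (hx1 : x ≠ 1) : 1 - x ≠ 0 :=
  sub_ne_zero.mpr (Ne.symm hx1)

lemma aux_inv_ne_one {x : F} (hx1 : x ≠ 1) : x⁻¹ ≠ 1 :=
  fun h => hx1 (inv_eq_one.mp h)

lemma aux_div_ne_one {x y : F} (hx0 : x ≠ 0) (hxy : x ≠ y) : y / x ≠ 1 :=
  fun h => hxy (((div_eq_one_iff_eq hx0).mp h).symm)

lemma aux_z_ne_one {x y : F} (hy1 : y ≠ 1) (hxy : x ≠ y) :
    (1 - x⁻¹) / (1 - y⁻¹) ≠ 1 := by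
  intro h
  have h' := (div_eq_one_iff_eq (aux_one_sub_ne (aux_inv_ne_one hy1))).mp h
  have hinv : x⁻¹ = y⁻¹ := by
    rw [← sub_sub_cancel 1 x⁻¹, h', sub_sub_cancel]
  exact hxy (inv_injective hinv)

lemma aux_w_ne_one {x y : F} (hy1 : y ≠ 1) (hxy : x ≠ y) :
    (1 - x) / (1 - y) ≠ 1 := by
  intro h
  have h' := (div_eq_one_iff_eq (aux_one_sub_ne hy1)).mp h
  have : x = y := by rw [← sub_sub_cancel 1 x, h', sub_sub_cancel]
  exact hxy this

end Aux

/-!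
Put `u = y / x` and `w = (1 - x) / (1 - y)`. The remaining argument `z = (1 - x⁻¹) / (1 - y⁻¹)` of
the five-term relation is the product `w * u`, while `1 - u`, `1 - w` and `1 - z` are `x - y`
divided by `x`, `1 - y` and `(1 - y) * x` respectively. By bilinearity the terms containing `x - y`
cancel in `u ∧ (1 - u) - z ∧ (1 - z) + w ∧ (1 - w)`, leaving `u ∧ (1 - y) + w ∧ x`, which
antisymmetry turns into `y ∧ (1 - y) - x ∧ (1 - x)`.
-/

section AlternatingMap

variable {R M N : Type*} [CommSemiring R] [AddCommMonoid M] [Module R M] [AddCommMonoid N]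
  [Module R N]

/-- An alternating map in two variables, viewed as a bilinear map. -/
def bilinearOfAlternating (f : M [⋀^Fin 2]→ₗ[R] N) : M →ₗ[R] M →ₗ[R] N :=
  LinearMap.mk₂ R (fun a b ↦ f ![a, b])
    (fun a a' b ↦ f.map_vecCons_add ![b] a a')
    (fun c a b ↦ f.map_vecCons_smul ![b] c a)
    (fun a b b' ↦ (f.curryLeft a).map_vecCons_add ![] b b')
    (fun c a b ↦ (f.curryLeft a).map_vecCons_smul ![] c b)

theorem isAlt_bilinearOfAlternating (f : M [⋀^Fin 2]→ₗ[R] N) : (bilinearOfAlternating f).IsAlt :=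
  fun a ↦ f.map_eq_zero_of_eq ![a, a] (i := 0) (j := 1) rfl zero_ne_one

end AlternatingMap

section Wedge

variable (R M : Type*) [CommRing R] [AddCommGroup M] [Module R M]

/-- The wedge product `(a, b) ↦ a ∧ b` as a bilinear map into the second exterior power. -/
def wedgePairing : M →ₗ[R] M →ₗ[R] ⋀[R]^2 M :=
  bilinearOfAlternating (exteriorPower.ιMulti R 2)

theorem isAlt_wedgePairing : (wedgePairing R M).IsAlt :=
  isAlt_bilinearOfAlternating _

end Wedge

section IsAlt

variable {R M N : Type*} [CommSemiring R] [AddCommGroup M] [Module R M] [AddCommGroup N]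
  [Module R N]

theorem fiveTerm_eq_zero_of_isAlt {φ : M →ₗ[R] M →ₗ[R] N} (hφ : φ.IsAlt) (x y a b d : M) :
    φ x a - φ y b + φ (y - x) (d - x) - φ (a - b + (y - x)) (d - (b + x))
      + φ (a - b) (d - b) = 0 := by
  have cancel_d : ∀ u w : M, φ u (d - x) - φ (w + u) (d - (b + x)) + φ w (d - b)
      = φ u b + φ w x := by
    intro u w
    simp only [map_add, map_sub, LinearMap.add_apply]
    abel
  have antisymm : φ (y - x) b + φ (a - b) x = φ y b - φ x a := by
    simp only [map_sub, LinearMap.sub_apply, ← hφ.neg x]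
    abel
  calc
    _ = φ x a - φ y b + (φ (y - x) (d - x) - φ (a - b + (y - x)) (d - (b + x))
          + φ (a - b) (d - b)) := by abel
    _ = 0 := by rw [cancel_d, antisymm]; abel

end IsAlt

section FieldIdentities

variable {F}

theorem one_sub_div_one_sub {x y : F} (hy1 : y ≠ 1) :
    1 - (1 - x) / (1 - y) = (x - y) / (1 - y) := by
  rw [one_sub_div (aux_one_sub_ne hy1), sub_sub_sub_cancel_left]

theorem one_sub_inv_div_one_sub_inv {x y : F} (hx0 : x ≠ 0) (hy0 : y ≠ 0) :
    (1 - x⁻¹) / (1 - y⁻¹) = (1 - x) / (1 - y) * (y / x) := by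
  have one_sub_inv {t : F} (ht : t ≠ 0) : 1 - t⁻¹ = -((1 - t) / t) := by
    field_simp
    ring
  rw [one_sub_inv hx0, one_sub_inv hy0, neg_div_neg_eq, div_div_div_eq, div_mul_div_comm,
    mul_comm x]

theorem one_sub_one_sub_inv_div {x y : F} (hx0 : x ≠ 0) (hy0 : y ≠ 0) (hy1 : y ≠ 1) :
    1 - (1 - x⁻¹) / (1 - y⁻¹) = (x - y) / ((1 - y) * x) := by
  have := aux_one_sub_ne hy1
  rw [one_sub_inv_div_one_sub_inv hx0 hy0]
  field_simp
  ring

end FieldIdentities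

section OneSubPairing

variable {F} {N : Type*} [AddCommGroup N] (φ : Additive Fˣ →ₗ[ℤ] Additive Fˣ →ₗ[ℤ] N)

/-- The value `φ(t, 1 - t)` of a pairing `φ` on `Fˣ` at `t ∈ F ∖ {0, 1}`. For
`wedgePairing` this is `t ∧ (1 - t)`. -/
def oneSubPairing (t : {t : F // t ≠ 0 ∧ t ≠ 1}) : N :=
  φ (.ofMul (Units.mk0 t t.2.1)) (.ofMul (Units.mk0 (1 - t) (aux_one_sub_ne t.2.2)))

theorem oneSubPairing_eq {t : {t : F // t ≠ 0 ∧ t ≠ 1}} {u v : Fˣ}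
    (hu : (t : F) = u) (hv : 1 - (t : F) = v) :
    oneSubPairing φ t = φ (.ofMul u) (.ofMul v) := by
  obtain rfl : Units.mk0 (t : F) t.2.1 = u := Units.ext hu
  obtain rfl : Units.mk0 (1 - t : F) (aux_one_sub_ne t.2.2) = v := Units.ext hv
  rfl

variable {φ}

theorem oneSubPairing_fiveTerm (hφ : φ.IsAlt) (x y u z w : {t : F // t ≠ 0 ∧ t ≠ 1})
    (hu : (u : F) = y / x) (hz : (z : F) = (1 - (x : F)⁻¹) / (1 - (y : F)⁻¹))
    (hw : (w : F) = (1 - x) / (1 - y)) :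
    oneSubPairing φ x - oneSubPairing φ y + oneSubPairing φ u - oneSubPairing φ z
      + oneSubPairing φ w = 0 := by
  obtain ⟨x, hx0, hx1⟩ := x
  obtain ⟨y, hy0, hy1⟩ := y
  have hxy : x - y ≠ 0 := fun h ↦
    u.2.2 (hu.trans ((div_eq_one_iff_eq hx0).mpr (sub_eq_zero.mp h).symm))
  let X := Units.mk0 x hx0
  let Y := Units.mk0 y hy0
  let A := Units.mk0 (1 - x) (aux_one_sub_ne hx1)
  let B := Units.mk0 (1 - y) (aux_one_sub_ne hy1)
  let D := Units.mk0 (x - y) hxy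
  have pairing_u : oneSubPairing φ u = φ (.ofMul (Y / X)) (.ofMul (D / X)) :=
    oneSubPairing_eq φ (by simp [hu, X, Y]) (by simp [hu, X, D, one_sub_div hx0])
  have pairing_z : oneSubPairing φ z = φ (.ofMul (A / B * (Y / X))) (.ofMul (D / (B * X))) :=
    oneSubPairing_eq φ (by simp [hz, X, Y, A, B, one_sub_inv_div_one_sub_inv hx0 hy0])
      (by simp [hz, X, B, D, one_sub_one_sub_inv_div hx0 hy0 hy1])
  have pairing_w : oneSubPairing φ w = φ (.ofMul (A / B)) (.ofMul (D / B)) :=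
    oneSubPairing_eq φ (by simp [hw, A, B]) (by simp [hw, B, D, one_sub_div_one_sub hy1])
  rw [pairing_u, pairing_z, pairing_w]
  exact fiveTerm_eq_zero_of_isAlt hφ (.ofMul X) (.ofMul Y) (.ofMul A) (.ofMul B) (.ofMul D)

/-- The homomorphism `P(F) → N`, `[t] ↦ φ(t, 1 - t)`, induced by an alternating pairing `φ` on `Fˣ`.
For `wedgePairing` this is `λ`. -/
def PreBloch.lift (hφ : φ.IsAlt) : PreBloch F →+ N :=
  QuotientAddGroup.lift _ (FreeAbelianGroup.lift (oneSubPairing φ)) <| by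
    rw [AddSubgroup.closure_le]
    rintro _ ⟨x, y, -, hu, hz, hw, rfl⟩
    simp only [SetLike.mem_coe, AddMonoidHom.mem_ker, map_add, map_sub,
      FreeAbelianGroup.lift_apply_of]
    exact oneSubPairing_fiveTerm hφ x y ⟨_, hu⟩ ⟨_, hz⟩ ⟨_, hw⟩ rfl rfl rfl

theorem PreBloch.lift_mk_of (hφ : φ.IsAlt) (t : {t : F // t ≠ 0 ∧ t ≠ 1}) :
    PreBloch.lift hφ (QuotientAddGroup.mk (FreeAbelianGroup.of t)) = oneSubPairing φ t :=
  FreeAbelianGroup.lift_apply_of _ t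

theorem oneSubPairing_wedgePairing (t : {t : F // t ≠ 0 ∧ t ≠ 1}) :
    oneSubPairing (wedgePairing ℤ (Additive Fˣ)) t
      = wedgeD F t (1 - t) t.2.1 (aux_one_sub_ne t.2.2) :=
  rfl

end OneSubPairing

/-- **Well-definedness of `λ : P(F) → ∧²(Fˣ)`, `[x] ↦ x ∧ (1-x)`:** the five-term
combination of wedges vanishes in `∧²(Fˣ)`, and consequently `[x] ↦ x ∧ (1-x)`
descends to a homomorphism `λ : P(F) → ∧²(Fˣ)`. -/
theorem fiveTerm_wedge_relation :
    (∀ (x y : F) (hx0 : x ≠ 0) (hx1 : x ≠ 1) (hy0 : y ≠ 0) (hy1 : y ≠ 1)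
        (hxy : x ≠ y),
      wedgeD F x (1 - x) hx0 (aux_one_sub_ne hx1)
        - wedgeD F y (1 - y) hy0 (aux_one_sub_ne hy1)
        + wedgeD F (y / x) (1 - y / x) (div_ne_zero hy0 hx0)
            (aux_one_sub_ne (aux_div_ne_one hx0 hxy))
        - wedgeD F ((1 - x⁻¹) / (1 - y⁻¹)) (1 - (1 - x⁻¹) / (1 - y⁻¹))
            (div_ne_zero (aux_one_sub_ne (aux_inv_ne_one hx1))
              (aux_one_sub_ne (aux_inv_ne_one hy1)))
            (aux_one_sub_ne (aux_z_ne_one hy1 hxy))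
        + wedgeD F ((1 - x) / (1 - y)) (1 - (1 - x) / (1 - y))
            (div_ne_zero (aux_one_sub_ne hx1) (aux_one_sub_ne hy1))
            (aux_one_sub_ne (aux_w_ne_one hy1 hxy)) = 0) ∧
    ∃ lam : PreBloch F →+ ⋀[ℤ]^2 (Additive Fˣ),
      ∀ (x : F) (h0 : x ≠ 0) (h1 : x ≠ 1),
        lam (QuotientAddGroup.mk (FreeAbelianGroup.of ⟨x, h0, h1⟩)) =
          wedgeD F x (1 - x) h0 (aux_one_sub_ne h1) := by
  have wedge_isAlt := isAlt_wedgePairing ℤ (Additive Fˣ)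
  refine ⟨fun x y hx0 hx1 hy0 hy1 hxy ↦ ?_, PreBloch.lift wedge_isAlt, fun x h0 h1 ↦ ?_⟩
  · have hu0 := div_ne_zero hy0 hx0
    have hz0 := div_ne_zero (aux_one_sub_ne (aux_inv_ne_one hx1))
      (aux_one_sub_ne (aux_inv_ne_one hy1))
    have hw0 := div_ne_zero (aux_one_sub_ne hx1) (aux_one_sub_ne hy1)
    simpa only [oneSubPairing_wedgePairing] using
      oneSubPairing_fiveTerm wedge_isAlt ⟨x, hx0, hx1⟩ ⟨y, hy0, hy1⟩
        ⟨_, hu0, aux_div_ne_one hx0 hxy⟩ ⟨_, hz0, aux_z_ne_one hy1 hxy⟩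
        ⟨_, hw0, aux_w_ne_one hy1 hxy⟩ rfl rfl rfl
  · rw [PreBloch.lift_mk_of, oneSubPairing_wedgePairing]
end
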